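/- Frenet–Serret formulae for CP^n in denominator-free form (Proposition 'Frenet-Serret formulae for CP^n'): for every 0 ≤ ℓ ≤ n and all z, w ∈ ℂ, the vectors ṽ_ℓ satisfy τ_{ℓ+1}(z,w) · ∂_z ṽ_ℓ(z,w) = (∂_z τ_{ℓ+1}(z,w)) · ṽ_ℓ(z,w) + τ_ℓ(z,w) · ṽ_{ℓ+1}(z,w) and τ_ℓ(z,w) · ∂_w ṽ_ℓ(z,w) = (∂_w τ_ℓ(z,w)) · ṽ_ℓ(z,w) − τ_{ℓ+1}(z,w) · ṽ_{ℓ−1}(z,w), where ∂_z, ∂_w act componentwise and ṽ_{−1} = ṽ_{n+1} = 0; the mirror identities hold for v̄_ℓ with the roles of z and w interchanged: τ_{ℓ+1}·∂_w v̄_ℓ = (∂_w τ_{ℓ+1})·v̄_ℓ + τ_ℓ·v̄_{ℓ+1} and τ_ℓ·∂_z v̄_ℓ = (∂_z τ_ℓ)·v̄_ℓ − τ_{ℓ+1}·v̄_{ℓ−1}. (Dividing by √(τ_ℓτ_{ℓ+1}) these are the Frenet–Serret equations for the orthonormal moving frame ẽ_ℓ = ṽ_ℓ/√(τ_ℓτ_{ℓ+1}).)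 -/

import Mathlib

open scoped BigOperators

/-- Componentwise `i`-th iterated complex derivative of an embedding function. -/
noncomputable def Dv (n : ℕ) (f : ℂ → Fin (n + 1) → ℂ) (i : ℕ) (z : ℂ)
    (A : Fin (n + 1)) : ℂ :=
  iteratedDeriv i (fun t => f t A) z

/-- The matrix η(z,w)_{i j} = ∑_A f^{(i)}_A(z) g^{(j)}_A(w). -/
noncomputable def etaM (n : ℕ) (f g : ℂ → Fin (n + 1) → ℂ) (z w : ℂ) :
    Matrix (Fin (n + 1)) (Fin (n + 1)) ℂ :=
  Matrix.of fun i j => ∑ A, Dv n f (i : ℕ) z A * Dv n g (j : ℕ) w A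

/-- τ_ℓ(z,w): the leading ℓ×ℓ principal minor of η(z,w) (τ_0 = 1). -/
noncomputable def tauF (n : ℕ) (f g : ℂ → Fin (n + 1) → ℂ) (ℓ : ℕ) (z w : ℂ) : ℂ :=
  Matrix.det (Matrix.of fun i j : Fin ℓ => ∑ A, Dv n f (i : ℕ) z A * Dv n g (j : ℕ) w A)

/-- The A-th component of the vector ṽ_ℓ(z,w). -/
noncomputable def vtil (n : ℕ) (f g : ℂ → Fin (n + 1) → ℂ) (ℓ : ℕ) (z w : ℂ)
    (A : Fin (n + 1)) : ℂ :=
  Matrix.det (Matrix.of fun j i : Fin (ℓ + 1) =>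
    if (j : ℕ) < ℓ then ∑ B, Dv n f (i : ℕ) z B * Dv n g (j : ℕ) w B
    else Dv n f (i : ℕ) z A)

/-- The A-th component of the vector v̄_ℓ(z,w). -/
noncomputable def vbar (n : ℕ) (f g : ℂ → Fin (n + 1) → ℂ) (ℓ : ℕ) (z w : ℂ)
    (A : Fin (n + 1)) : ℂ :=
  Matrix.det (Matrix.of fun i j : Fin (ℓ + 1) =>
    if (i : ℕ) < ℓ then ∑ B, Dv n f (i : ℕ) z B * Dv n g (j : ℕ) w B
    else Dv n g (j : ℕ) w A)

/-!
The first row entries `η_{0j}(z, w)` are functions of `z` whose successive derivatives are the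
columns `η_{·j}`, so `τ_ℓ` is the Wronskian in `z` of `η_{00}, …, η_{0,ℓ-1}`, and the `A`-th
component of `ṽ_ℓ` is the Wronskian of these functions together with `f_A`. Differentiating a
Wronskian in `z` only affects its last column, which makes the first equation an instance of the
Desnanot–Jacobi identity. Differentiating in `w` replaces `η_{0j}` by `η_{0,j+1}`, so only the last
of these rows contributes, and the second equation is a three-term Plücker relation. The vector
`ṽ_{n+1}` vanishes because its components are Wronskians of `n + 2` functions in the span of
`f_0, …, f_n`. Exchanging `f` and `g` turns `ṽ` into `v̄`.
-/

section Determinant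

variable {R ι κ : Type*} {k : ℕ}

/-- The matrix `M` with the vector `v` appended as a new last row. -/
def appendRow (M : Matrix (Fin k) ι R) (v : ι → R) : Matrix (Fin (k + 1)) ι R :=
  Matrix.of (Fin.snoc (α := fun _ ↦ ι → R) M v)

@[simp]
lemma appendRow_castSucc (M : Matrix (Fin k) ι R) (v : ι → R) (i : Fin k) :
    appendRow M v i.castSucc = M i :=
  Fin.snoc_castSucc (α := fun _ ↦ ι → R) ..

@[simp]
lemma appendRow_last (M : Matrix (Fin k) ι R) (v : ι → R) :
    appendRow M v (Fin.last k) = v :=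
  Fin.snoc_last (α := fun _ ↦ ι → R) ..

lemma appendRow_updateRow_last (M : Matrix (Fin k) ι R) (v c : ι → R) :
    (appendRow M v).updateRow (Fin.last k) c = appendRow M c :=
  Fin.update_snoc_last (α := fun _ ↦ ι → R) ..

lemma appendRow_updateRow_castSucc (M : Matrix (Fin k) ι R) (v c : ι → R) (i : Fin k) :
    (appendRow M v).updateRow i.castSucc c = appendRow (M.updateRow i c) v :=
  (Fin.snoc_update (α := fun _ ↦ ι → R) ..).symm

lemma appendRow_submatrix (M : Matrix (Fin k) ι R) (v : ι → R) (s : κ → ι) :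
    (appendRow M v).submatrix id s = appendRow (M.submatrix id s) (v ∘ s) := by
  ext i j
  refine Fin.lastCases ?_ (fun i ↦ ?_) i <;> simp [Matrix.submatrix_apply]

variable [CommRing R]

lemma sum_det_updateRow_mul [Fintype ι] [DecidableEq ι] (A : Matrix ι ι R)
    (φ : (ι → R) →ₗ[R] R) (c : ι → R) :
    ∑ i, (A.updateRow i c).det * φ (A i) = A.det * φ c := by
  have cramer : ∑ i, (A.updateRow i c).det • A i = A.det • c := by
    simpa only [Matrix.mulVec_transpose, Matrix.vecMul_eq_sum, Matrix.cramer_transpose_apply,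
      Matrix.det_transpose] using Matrix.mulVec_cramer A.transpose c
  simpa only [map_sum, map_smul, smul_eq_mul] using congrArg φ cramer

/-- The functional `v ↦ det (M, v)`, restricted to the columns selected by `s`, used to contract
Cramer's rule to a Plücker relation. -/
def borderedDet (M : Matrix (Fin k) ι R) (s : Fin (k + 1) → ι) : (ι → R) →ₗ[R] R :=
  Matrix.detRowAlternating.toMultilinearMap.toLinearMap
    (appendRow (M.submatrix id s) 0) (Fin.last k) ∘ₗ LinearMap.funLeft R R s

lemma borderedDet_apply (M : Matrix (Fin k) ι R) (s : Fin (k + 1) → ι) (v : ι → R) :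
    borderedDet M s v = (appendRow (M.submatrix id s) (v ∘ s)).det :=
  congrArg Matrix.det (appendRow_updateRow_last (M.submatrix id s) 0 (v ∘ s))

lemma borderedDet_row (M : Matrix (Fin k) ι R) (s : Fin (k + 1) → ι) (i : Fin k) :
    borderedDet M s (M i) = 0 := by
  rw [borderedDet_apply]
  refine Matrix.det_zero_of_row_eq (Fin.castSucc_lt_last i).ne ?_
  rw [appendRow_castSucc, appendRow_last]
  rfl

lemma det_appendRow_swap (M : Matrix (Fin k) (Fin (k + 2)) R) (a b : Fin (k + 2) → R) :
    (appendRow (appendRow M a) b).det = -(appendRow (appendRow M b) a).det := by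
  have hne : (Fin.last k).castSucc ≠ Fin.last (k + 1) := (Fin.castSucc_lt_last _).ne
  have swap_rows : (appendRow (appendRow M b) a).submatrix
      (Equiv.swap (Fin.last k).castSucc (Fin.last (k + 1))) id = appendRow (appendRow M a) b := by
    ext i j
    refine Fin.lastCases ?_ (Fin.lastCases ?_ fun i ↦ ?_) i
    · simp
    · simp
    · rw [Matrix.submatrix_apply, Equiv.swap_apply_of_ne_of_ne
        (by simp) (Fin.castSucc_lt_last _).ne]
      simp
  rw [← swap_rows, Matrix.det_permute, Equiv.Perm.sign_swap hne]
  simp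

/-- Cramer's rule writes `det (M, a, b) • c` as a combination of the rows of `M` and of `a`, `b`;
the functional `borderedDet M s` kills the rows of `M`. -/
theorem borderedDet_plucker (M : Matrix (Fin k) (Fin (k + 2)) R) (s : Fin (k + 1) → Fin (k + 2))
    (a b c : Fin (k + 2) → R) :
    borderedDet M s a * (appendRow (appendRow M b) c).det
      - borderedDet M s b * (appendRow (appendRow M a) c).det
      + borderedDet M s c * (appendRow (appendRow M a) b).det = 0 := by
  have cramer := sum_det_updateRow_mul (appendRow (appendRow M a) b) (borderedDet M s) c
  simp only [Fin.sum_univ_castSucc, appendRow_castSucc, appendRow_last, borderedDet_row, mul_zero,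
    Finset.sum_const_zero, zero_add, appendRow_updateRow_castSucc, appendRow_updateRow_last]
    at cramer
  rw [det_appendRow_swap M c b] at cramer
  linear_combination -cramer

lemma det_appendRow_single_last (M : Matrix (Fin k) (Fin (k + 1)) R) :
    (appendRow M (Pi.single (Fin.last k) 1)).det = (M.submatrix id Fin.castSucc).det := by
  rw [Matrix.det_succ_row _ (Fin.last k), Finset.sum_eq_single (Fin.last k)]
  · have removed_last : (appendRow M (Pi.single (Fin.last k) 1)).submatrix
        Fin.castSucc Fin.castSucc = M.submatrix id Fin.castSucc := by
      ext i j
      simp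
    simp only [Fin.succAbove_last, removed_last]
    simp
  · intro j _ hj
    simp [hj]
  · simp

theorem det_mul_det_appendRow_appendRow (M : Matrix (Fin k) (Fin (k + 2)) R)
    (a b : Fin (k + 2) → R) :
    (M.submatrix id (Fin.castSucc ∘ Fin.castSucc)).det * (appendRow (appendRow M a) b).det
      = ((appendRow M a).submatrix id Fin.castSucc).det
          * ((appendRow M b).submatrix id (Fin.last k).castSucc.succAbove).det
        - ((appendRow M a).submatrix id (Fin.last k).castSucc.succAbove).det
          * ((appendRow M b).submatrix id Fin.castSucc).det := by
  set s : Fin (k + 1) → Fin (k + 2) := (Fin.last k).castSucc.succAbove with hs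
  have single_comp : (Pi.single (Fin.last (k + 1)) 1 : Fin (k + 2) → R) ∘ s
      = Pi.single (Fin.last k) 1 := by
    funext j
    refine Fin.lastCases ?_ (fun j ↦ ?_) j
    · simp [hs]
    · simp [hs, Fin.succAbove_castSucc_of_lt _ _ (Fin.castSucc_lt_last j)]
  have comp_castSucc : s ∘ Fin.castSucc = Fin.castSucc ∘ Fin.castSucc := by
    funext j
    exact Fin.succAbove_castSucc_of_lt _ _ (Fin.castSucc_lt_last j)
  have plucker := borderedDet_plucker M s a b (Pi.single (Fin.last (k + 1)) 1)
  simp only [det_appendRow_single_last, borderedDet_apply, single_comp, Matrix.submatrix_submatrix,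
    Function.comp_id, comp_castSucc] at plucker
  simp only [appendRow_submatrix] at plucker ⊢
  linear_combination plucker

lemma det_mul_eq_zero_of_card_lt [IsDomain R] [Fintype ι] [Fintype κ] [DecidableEq κ]
    (h : Fintype.card ι < Fintype.card κ) (A : Matrix κ ι R) (B : Matrix ι κ R) :
    (A * B).det = 0 := by
  by_contra hne
  have rows_mul : LinearIndependent R (B.vecMulLinear ∘ A) :=
    Matrix.linearIndependent_rows_of_det_ne_zero hne
  have card_le := (rows_mul.of_comp B.vecMulLinear).fintype_card_le_finrank
  rw [Module.finrank_fintype_fun_eq_card] at card_le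
  exact h.not_ge card_le

end Determinant

section Wronskian

variable {𝕜 : Type*} [NontriviallyNormedField 𝕜] {k : ℕ}

lemma hasDerivAt_det {ι : Type*} [Fintype ι] [DecidableEq ι] {M : 𝕜 → Matrix ι ι 𝕜}
    {M' : Matrix ι ι 𝕜} {x : 𝕜} (h : ∀ i, HasDerivAt (fun t ↦ M t i) (M' i) x) :
    HasDerivAt (fun t ↦ (M t).det) (∑ i, ((M x).updateRow i (M' i)).det) x := by
  let det : ContinuousMultilinearMap 𝕜 (fun _ : ι ↦ ι → 𝕜) 𝕜 :=
    { toMultilinearMap := Matrix.detRowAlternating.toMultilinearMap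
      cont := continuous_id.matrix_det }
  have hdet := (det.hasFDerivAt (M x)).comp_hasDerivAt x (hasDerivAt_pi.2 h)
  exact hdet.congr_deriv (det.linearDeriv_apply (M x) M')

lemma hasDerivAt_det_updateRow {ι : Type*} [Fintype ι] [DecidableEq ι] {M : 𝕜 → Matrix ι ι 𝕜}
    {M' : Matrix ι ι 𝕜} {x : 𝕜} (h : ∀ i, HasDerivAt (fun t ↦ M t i) (M' i) x) (p : ι)
    (hp : ∀ i ≠ p, M' i = 0 ∨ ∃ i' ≠ i, M' i = M x i') :
    HasDerivAt (fun t ↦ (M t).det) ((M x).updateRow p (M' p)).det x := by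
  refine (hasDerivAt_det h).congr_deriv ?_
  refine Fintype.sum_eq_single p fun i hi ↦ ?_
  obtain h_zero | ⟨i', hne, h_row⟩ := hp i hi
  · exact Matrix.det_eq_zero_of_row_eq_zero i fun j ↦ by rw [Matrix.updateRow_self, h_zero]; rfl
  · refine Matrix.det_zero_of_row_eq hne.symm ?_
    rw [Matrix.updateRow_self, Matrix.updateRow_ne hne, h_row]

lemma updateRow_last_eq_appendRow {R ι : Type*} (r : ℕ → ι → R) (v : ι → R) :
    (Matrix.of fun i : Fin (k + 1) ↦ r i).updateRow (Fin.last k) v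
      = appendRow (Matrix.of fun i : Fin k ↦ r i) v := by
  ext i j
  refine Fin.lastCases ?_ (fun i ↦ ?_) i
  · simp
  · simp [(Fin.castSucc_lt_last i).ne]

lemma hasDerivAt_det_of_shift {r : 𝕜 → ℕ → Fin (k + 1) → 𝕜} {x : 𝕜}
    (hr : ∀ j ≤ k, HasDerivAt (fun t ↦ r t j) (r x (j + 1)) x) :
    HasDerivAt (fun t ↦ (Matrix.of fun i : Fin (k + 1) ↦ r t i).det)
      (appendRow (Matrix.of fun i : Fin k ↦ r x i) (r x (k + 1))).det x := by
  rw [← updateRow_last_eq_appendRow]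
  refine hasDerivAt_det_updateRow (M' := Matrix.of fun i : Fin (k + 1) ↦ r x (i + 1))
    (fun i ↦ hr i i.is_le) (Fin.last k) fun i ↦ Fin.lastCases (by simp) (fun i _ ↦ ?_) i
  exact .inr ⟨i.succ, Fin.castSucc_lt_succ.ne', rfl⟩

lemma hasDerivAt_det_appendRow_of_shift {r : 𝕜 → ℕ → Fin (k + 2) → 𝕜} {x : 𝕜}
    (hr : ∀ j ≤ k, HasDerivAt (fun t ↦ r t j) (r x (j + 1)) x) (b : Fin (k + 2) → 𝕜) :
    HasDerivAt (fun t ↦ (appendRow (Matrix.of fun i : Fin (k + 1) ↦ r t i) b).det)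
      (appendRow (appendRow (Matrix.of fun i : Fin k ↦ r x i) (r x (k + 1))) b).det x := by
  rw [← updateRow_last_eq_appendRow, ← appendRow_updateRow_castSucc]
  have row_deriv (i : Fin (k + 2)) :
      HasDerivAt (fun t ↦ appendRow (Matrix.of fun i : Fin (k + 1) ↦ r t i) b i)
        (appendRow (Matrix.of fun i : Fin (k + 1) ↦ r x (i + 1)) 0 i) x := by
    refine Fin.lastCases ?_ (fun i ↦ ?_) i
    · simpa using hasDerivAt_const x b
    · simp only [appendRow_castSucc]
      exact hr i i.is_le
  convert hasDerivAt_det_updateRow row_deriv (Fin.last k).castSucc fun i ↦ ?_ using 2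
  · simp only [appendRow_castSucc]
    rfl
  · refine Fin.lastCases (by simp) (Fin.lastCases (by simp) fun i _ ↦ ?_) i
    refine .inr ⟨i.succ.castSucc, by simp [Fin.ext_iff], ?_⟩
    rw [appendRow_castSucc, appendRow_castSucc]
    rfl

/-- The matrix whose `i`-th row consists of the derivatives of `u i` at `z` of orders `< m`. -/
noncomputable def jetMatrix (m : ℕ) (u : Fin k → 𝕜 → 𝕜) (z : 𝕜) : Matrix (Fin k) (Fin m) 𝕜 :=
  Matrix.of fun i j ↦ iteratedDeriv j (u i) z

lemma jetMatrix_snoc (m : ℕ) (u : Fin k → 𝕜 → 𝕜) (a : 𝕜 → 𝕜) (z : 𝕜) :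
    jetMatrix m (Fin.snoc u a) z = appendRow (jetMatrix m u z) fun j ↦ iteratedDeriv j a z := by
  ext i j
  refine Fin.lastCases ?_ (fun i ↦ ?_) i <;> simp [jetMatrix]

/-- The Wronskian of a finite family of functions of one variable. -/
noncomputable def wronskian (u : Fin k → 𝕜 → 𝕜) (z : 𝕜) : 𝕜 :=
  (jetMatrix k u z).det

/-- The column omitted by `succAbove` is that of the `k`-th derivatives. -/
lemma hasDerivAt_wronskian {u : Fin (k + 1) → 𝕜 → 𝕜} (hu : ∀ i, ContDiff 𝕜 (k + 1) (u i))
    (z : 𝕜) :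
    HasDerivAt (wronskian u)
      ((jetMatrix (k + 2) u z).submatrix id (Fin.last k).castSucc.succAbove).det z := by
  have column_deriv (j : ℕ) (hj : j ≤ k) :
      HasDerivAt (fun t i ↦ iteratedDeriv j (u i) t) (fun i ↦ iteratedDeriv (j + 1) (u i) z) z := by
    refine hasDerivAt_pi.2 fun i ↦ ?_
    rw [iteratedDeriv_succ]
    exact ((hu i).differentiable_iteratedDeriv j (mod_cast Nat.lt_succ_of_le hj) z).hasDerivAt
  have transposed : ((jetMatrix (k + 2) u z).submatrix id (Fin.last k).castSucc.succAbove).transpose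
      = appendRow (Matrix.of fun (j : Fin k) i ↦ iteratedDeriv j (u i) z)
          fun i ↦ iteratedDeriv (k + 1) (u i) z := by
    ext j i
    refine Fin.lastCases ?_ (fun j ↦ ?_) j
    · simp [jetMatrix]
    · simp [jetMatrix, Fin.succAbove_castSucc_of_lt _ _ (Fin.castSucc_lt_last j)]
  rw [← Matrix.det_transpose, transposed]
  convert! hasDerivAt_det_of_shift column_deriv using 2 with t
  exact (Matrix.det_transpose _).symm

theorem wronskian_snoc_mul_deriv_wronskian_snoc {u : Fin k → 𝕜 → 𝕜} {a b : 𝕜 → 𝕜}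
    (hu : ∀ i, ContDiff 𝕜 (k + 1) (u i)) (ha : ContDiff 𝕜 (k + 1) a)
    (hb : ContDiff 𝕜 (k + 1) b) (z : 𝕜) :
    wronskian (Fin.snoc u a) z * deriv (wronskian (Fin.snoc u b)) z
      = deriv (wronskian (Fin.snoc u a)) z * wronskian (Fin.snoc u b) z
        + wronskian u z * wronskian (Fin.snoc (Fin.snoc u a) b) z := by
  have deriv_snoc {c : 𝕜 → 𝕜} (hc : ContDiff 𝕜 (k + 1) c) :=
    (hasDerivAt_wronskian (u := Fin.snoc u c)
      (Fin.lastCases (by simpa using hc) (by simpa using hu)) z).deriv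
  rw [deriv_snoc ha, deriv_snoc hb]
  have desnanot := det_mul_det_appendRow_appendRow (jetMatrix (k + 2) u z)
    (fun j ↦ iteratedDeriv j a z) fun j ↦ iteratedDeriv j b z
  simp only [← jetMatrix_snoc] at desnanot
  exact eq_add_of_sub_eq' desnanot.symm

theorem wronskian_plucker (u : Fin k → 𝕜 → 𝕜) (a b c : 𝕜 → 𝕜) (z : 𝕜) :
    wronskian (Fin.snoc u a) z * wronskian (Fin.snoc (Fin.snoc u b) c) z
      - wronskian (Fin.snoc u b) z * wronskian (Fin.snoc (Fin.snoc u a) c) z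
      + wronskian (Fin.snoc u c) z * wronskian (Fin.snoc (Fin.snoc u a) b) z = 0 := by
  simp only [wronskian, jetMatrix_snoc]
  have plucker := borderedDet_plucker (jetMatrix (k + 2) u z) Fin.castSucc
    (fun j ↦ iteratedDeriv j a z) (fun j ↦ iteratedDeriv j b z) fun j ↦ iteratedDeriv j c z
  simp only [borderedDet_apply] at plucker
  exact plucker

lemma wronskian_eq_zero_of_card_lt {ι : Type*} [Fintype ι] (h : Fintype.card ι < k)
    {f : ι → 𝕜 → 𝕜} {z : 𝕜} (hf : ∀ A, ContDiffAt 𝕜 k (f A) z) (C : Matrix (Fin k) ι 𝕜) :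
    wronskian (fun i t ↦ ∑ A, C i A * f A t) z = 0 := by
  have factor : jetMatrix k (fun i t ↦ ∑ A, C i A * f A t) z
      = C * Matrix.of fun A (j : Fin k) ↦ iteratedDeriv j (f A) z := by
    ext i j
    have hj (A : ι) : ContDiffAt 𝕜 j (f A) z := (hf A).of_le (mod_cast j.is_lt.le)
    simp only [jetMatrix, Matrix.of_apply, Matrix.mul_apply]
    rw [iteratedDeriv_fun_sum fun A _ ↦ contDiffAt_const.mul (hj A)]
    simp only [iteratedDeriv_const_mul_field]
  rw [wronskian, factor]
  exact det_mul_eq_zero_of_card_lt (by simpa using h) ..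

lemma comp_val_succ_eq_snoc {α : Type*} (φ : ℕ → α) (m : ℕ) :
    (fun j : Fin (m + 1) ↦ φ j) = Fin.snoc (fun j : Fin m ↦ φ j) (φ m) := by
  funext j
  refine Fin.lastCases ?_ (fun j ↦ ?_) j <;> simp

theorem wronskian_mul_deriv_wronskian_snoc_of_shift {Φ : ℕ → 𝕜 → 𝕜 → 𝕜} {w z : 𝕜}
    (hΦ : ∀ j ≤ k, ∀ i, HasDerivAt (fun t ↦ iteratedDeriv i (Φ j t) z)
      (iteratedDeriv i (Φ (j + 1) w) z) w) (b : 𝕜 → 𝕜) :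
    wronskian (fun j : Fin (k + 1) ↦ Φ j w) z
        * deriv (fun t ↦ wronskian (Fin.snoc (fun j : Fin (k + 1) ↦ Φ j t) b) z) w
      = deriv (fun t ↦ wronskian (fun j : Fin (k + 1) ↦ Φ j t) z) w
          * wronskian (Fin.snoc (fun j : Fin (k + 1) ↦ Φ j w) b) z
        - wronskian (fun j : Fin (k + 2) ↦ Φ j w) z
          * wronskian (Fin.snoc (fun j : Fin k ↦ Φ j w) b) z := by
  have deriv_chain : HasDerivAt (fun t ↦ wronskian (fun j : Fin (k + 1) ↦ Φ j t) z)
      (wronskian (Fin.snoc (fun j : Fin k ↦ Φ j w) (Φ (k + 1) w)) z) w := by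
    simp only [wronskian, jetMatrix_snoc]
    exact hasDerivAt_det_of_shift (r := fun t j i ↦ iteratedDeriv i (Φ j t) z)
      fun j hj ↦ hasDerivAt_pi.2 fun i ↦ hΦ j hj i
  have deriv_snoc_chain :
      HasDerivAt (fun t ↦ wronskian (Fin.snoc (fun j : Fin (k + 1) ↦ Φ j t) b) z)
        (wronskian (Fin.snoc (Fin.snoc (fun j : Fin k ↦ Φ j w) (Φ (k + 1) w)) b) z) w := by
    simp only [wronskian, jetMatrix_snoc]
    exact hasDerivAt_det_appendRow_of_shift (r := fun t j i ↦ iteratedDeriv i (Φ j t) z)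
      (fun j hj ↦ hasDerivAt_pi.2 fun i ↦ hΦ j hj i) _
  rw [deriv_chain.deriv, deriv_snoc_chain.deriv, comp_val_succ_eq_snoc (fun j ↦ Φ j w) (k + 1),
    comp_val_succ_eq_snoc (fun j ↦ Φ j w) k]
  linear_combination wronskian_plucker (fun j : Fin k ↦ Φ j w) (Φ k w) (Φ (k + 1) w) b z

end Wronskian

section Embedding

variable {n : ℕ} {f g : ℂ → Fin (n + 1) → ℂ}

lemma hasDerivAt_Dv {A : Fin (n + 1)} (hf : Differentiable ℂ fun z ↦ f z A) (i : ℕ) (z : ℂ) :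
    HasDerivAt (fun t ↦ Dv n f i t A) (Dv n f (i + 1) z A) z := by
  simp only [Dv, iteratedDeriv_succ]
  exact (hf.contDiff.differentiable_iteratedDeriv' i z).hasDerivAt

/-- The entry `η_{0j}(·, w)` of the first row of `etaM`, as a function of its first variable and
for every `j : ℕ`; its derivatives are the entries of the `j`-th column. -/
noncomputable def etaFirstRow (n : ℕ) (f g : ℂ → Fin (n + 1) → ℂ) (j : ℕ) (w z : ℂ) : ℂ :=
  ∑ A, Dv n g j w A * f z A

lemma contDiff_etaFirstRow (hf : ∀ A, Differentiable ℂ fun z ↦ f z A) (j : ℕ) (w : ℂ)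
    {m : WithTop ℕ∞} : ContDiff ℂ m (etaFirstRow n f g j w) :=
  ContDiff.sum fun A _ ↦ contDiff_const.mul (hf A).contDiff

lemma iteratedDeriv_etaFirstRow (hf : ∀ A, Differentiable ℂ fun z ↦ f z A) (i j : ℕ) (w z : ℂ) :
    iteratedDeriv i (etaFirstRow n f g j w) z = ∑ A, Dv n f i z A * Dv n g j w A := by
  unfold etaFirstRow
  rw [iteratedDeriv_fun_sum fun A _ ↦ (contDiff_const.mul (hf A).contDiff).contDiffAt]
  exact Finset.sum_congr rfl fun A _ ↦ (iteratedDeriv_const_mul_field ..).trans (mul_comm ..)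

lemma hasDerivAt_iteratedDeriv_etaFirstRow (hf : ∀ A, Differentiable ℂ fun z ↦ f z A)
    (hg : ∀ A, Differentiable ℂ fun z ↦ g z A) (i j : ℕ) (w z : ℂ) :
    HasDerivAt (fun t ↦ iteratedDeriv i (etaFirstRow n f g j t) z)
      (iteratedDeriv i (etaFirstRow n f g (j + 1) w) z) w := by
  simp only [iteratedDeriv_etaFirstRow hf]
  exact HasDerivAt.fun_sum fun A _ ↦ (hasDerivAt_Dv (hg A) j w).const_mul _

lemma tauF_eq_wronskian (hf : ∀ A, Differentiable ℂ fun z ↦ f z A) (ℓ : ℕ) (z w : ℂ) :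
    tauF n f g ℓ z w = wronskian (fun j : Fin ℓ ↦ etaFirstRow n f g j w) z := by
  rw [tauF, wronskian, ← Matrix.det_transpose]
  congr 1
  ext j i
  simp [jetMatrix, iteratedDeriv_etaFirstRow hf]

lemma vtil_eq_wronskian (hf : ∀ A, Differentiable ℂ fun z ↦ f z A) (ℓ : ℕ) (z w : ℂ)
    (A : Fin (n + 1)) :
    vtil n f g ℓ z w A
      = wronskian (Fin.snoc (fun j : Fin ℓ ↦ etaFirstRow n f g j w) fun t ↦ f t A) z := by
  rw [vtil, wronskian]
  congr 1
  ext j i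
  refine Fin.lastCases ?_ (fun j ↦ ?_) j
  · simp [jetMatrix, Dv]
  · simp [jetMatrix, iteratedDeriv_etaFirstRow hf]

lemma vtil_eq_zero_of_lt (hf : ∀ A, Differentiable ℂ fun z ↦ f z A) {ℓ : ℕ} (hℓ : n < ℓ)
    (z w : ℂ) (A : Fin (n + 1)) : vtil n f g ℓ z w A = 0 := by
  have combination : (Fin.snoc (fun j : Fin ℓ ↦ etaFirstRow n f g j w) fun t ↦ f t A)
      = fun (i : Fin (ℓ + 1)) t ↦
        ∑ B, appendRow (Matrix.of fun j : Fin ℓ ↦ Dv n g j w) (Pi.single A 1) i B * f t B := by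
    funext i t
    refine Fin.lastCases ?_ (fun i ↦ ?_) i
    · simp [Pi.single_apply]
    · simp [etaFirstRow]
  rw [vtil_eq_wronskian hf, combination]
  exact wronskian_eq_zero_of_card_lt (by simpa using hℓ) (fun B ↦ (hf B).contDiff.contDiffAt) _

theorem tauF_succ_mul_deriv_fst_vtil (hf : ∀ A, Differentiable ℂ fun z ↦ f z A) (ℓ : ℕ) (z w : ℂ)
    (A : Fin (n + 1)) :
    tauF n f g (ℓ + 1) z w * deriv (fun z' ↦ vtil n f g ℓ z' w A) z
      = deriv (fun z' ↦ tauF n f g (ℓ + 1) z' w) z * vtil n f g ℓ z w A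
        + tauF n f g ℓ z w * (if ℓ < n then vtil n f g (ℓ + 1) z w A else 0) := by
  have vtil_succ : (if ℓ < n then vtil n f g (ℓ + 1) z w A else 0) = vtil n f g (ℓ + 1) z w A :=
    ite_eq_left_iff.2 fun h ↦ (vtil_eq_zero_of_lt hf (by lia) z w A).symm
  rw [vtil_succ]
  simp only [tauF_eq_wronskian hf, vtil_eq_wronskian hf,
    comp_val_succ_eq_snoc (fun j ↦ etaFirstRow n f g j w)]
  exact wronskian_snoc_mul_deriv_wronskian_snoc (fun j ↦ contDiff_etaFirstRow hf j w)
    (contDiff_etaFirstRow hf ℓ w) (hf A).contDiff z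

theorem tauF_mul_deriv_snd_vtil (hf : ∀ A, Differentiable ℂ fun z ↦ f z A)
    (hg : ∀ A, Differentiable ℂ fun z ↦ g z A) (ℓ : ℕ) (z w : ℂ) (A : Fin (n + 1)) :
    tauF n f g ℓ z w * deriv (fun w' ↦ vtil n f g ℓ z w' A) w
      = deriv (fun w' ↦ tauF n f g ℓ z w') w * vtil n f g ℓ z w A
        - tauF n f g (ℓ + 1) z w * (if 1 ≤ ℓ then vtil n f g (ℓ - 1) z w A else 0) := by
  cases ℓ with
  | zero => simp [tauF, vtil]
  | succ ℓ =>
    simpa only [tauF_eq_wronskian hf, vtil_eq_wronskian hf, Nat.le_add_left, if_true,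
      Nat.add_sub_cancel] using wronskian_mul_deriv_wronskian_snoc_of_shift
        (fun j _ i ↦ hasDerivAt_iteratedDeriv_etaFirstRow hf hg i j w z) fun t ↦ f t A

lemma tauF_swap (n : ℕ) (f g : ℂ → Fin (n + 1) → ℂ) (ℓ : ℕ) (z w : ℂ) :
    tauF n f g ℓ z w = tauF n g f ℓ w z := by
  rw [tauF, tauF, ← Matrix.det_transpose]
  simp only [Matrix.transpose, Matrix.of_apply, mul_comm]

lemma vbar_eq_vtil_swap (n : ℕ) (f g : ℂ → Fin (n + 1) → ℂ) (ℓ : ℕ) (z w : ℂ)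
    (A : Fin (n + 1)) : vbar n f g ℓ z w A = vtil n g f ℓ w z A := by
  simp only [vbar, vtil, mul_comm]

end Embedding

/-- Frenet–Serret formulae for CP^n in denominator-free form, with the
conventions ṽ_{−1} = v̄_{−1} = 0 and ṽ_{n+1} = v̄_{n+1} = 0. -/
theorem stmt10 (n : ℕ) (f g : ℂ → Fin (n + 1) → ℂ)
    (hf : ∀ A, Differentiable ℂ fun z => f z A)
    (hg : ∀ A, Differentiable ℂ fun z => g z A) :
    ∀ ℓ : ℕ, ℓ ≤ n → ∀ z w : ℂ, ∀ A : Fin (n + 1),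
      (tauF n f g (ℓ + 1) z w * deriv (fun z' => vtil n f g ℓ z' w A) z
        = deriv (fun z' => tauF n f g (ℓ + 1) z' w) z * vtil n f g ℓ z w A
          + tauF n f g ℓ z w * (if ℓ < n then vtil n f g (ℓ + 1) z w A else 0)) ∧
      (tauF n f g ℓ z w * deriv (fun w' => vtil n f g ℓ z w' A) w
        = deriv (fun w' => tauF n f g ℓ z w') w * vtil n f g ℓ z w A
          - tauF n f g (ℓ + 1) z w * (if 1 ≤ ℓ then vtil n f g (ℓ - 1) z w A else 0)) ∧
      (tauF n f g (ℓ + 1) z w * deriv (fun w' => vbar n f g ℓ z w' A) w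
        = deriv (fun w' => tauF n f g (ℓ + 1) z w') w * vbar n f g ℓ z w A
          + tauF n f g ℓ z w * (if ℓ < n then vbar n f g (ℓ + 1) z w A else 0)) ∧
      (tauF n f g ℓ z w * deriv (fun z' => vbar n f g ℓ z' w A) z
        = deriv (fun z' => tauF n f g ℓ z' w) z * vbar n f g ℓ z w A
          - tauF n f g (ℓ + 1) z w * (if 1 ≤ ℓ then vbar n f g (ℓ - 1) z w A else 0)) := by
  intro ℓ _ z w A
  refine ⟨tauF_succ_mul_deriv_fst_vtil hf ℓ z w A, tauF_mul_deriv_snd_vtil hf hg ℓ z w A, ?_, ?_⟩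
  · simp only [vbar_eq_vtil_swap, tauF_swap n f g]
    exact tauF_succ_mul_deriv_fst_vtil hg ℓ w z A
  · simp only [vbar_eq_vtil_swap, tauF_swap n f g]
    exact tauF_mul_deriv_snd_vtil hg hf ℓ w z A
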